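/- arXiv:1408.5782 — 3 statements merged into one kernel-verified Lean document; each statement's English description precedes it below -/
import Mathlib

section
/- Let s = (q²+1)/2 and t = 1 + r((q−1)/2 + (q²+1)/2). Then q²·s ≡ s (mod N) and q²·t ≡ t (mod N), and s is not congruent to t modulo N; consequently the q²-cyclotomic cosets of s and of t modulo N are the singletons {s} and {t}. -/
/-- If `m` fixes `a` modulo `N`, then so does every power of `m`. -/
theorem mul_pow_modEq_of_mul_modEq {N a m : ℤ} (h : m * a ≡ a [ZMOD N]) (k : ℕ) :
    a * m ^ k ≡ a [ZMOD N] := by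
  induction k with
  | zero => simp [Int.ModEq.refl]
  | succ k ih =>
    calc a * m ^ (k + 1) = m * (a * m ^ k) := by ring
      _ ≡ m * a [ZMOD N] := ih.mul_left m
      _ ≡ a [ZMOD N] := h

/-- The `q²`-cyclotomic coset of an element fixed by `q²` is a singleton. -/
theorem cyclotomicCoset_eq_singleton {N a q : ℤ} (h : q ^ 2 * a ≡ a [ZMOD N]) :
    {x : ℤ | ∃ k : ℕ, x = (a * q ^ (2 * k)) % N} = {a % N} := by
  have hk (k : ℕ) : (a * q ^ (2 * k)) % N = a % N := by
    rw [pow_mul]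
    exact mul_pow_modEq_of_mul_modEq h k
  ext x
  simp [hk]


/-- Let `s = (q²+1)/2` and `t = 1 + r((q−1)/2 + (q²+1)/2)`. Then `q²·s ≡ s (mod N)`
and `q²·t ≡ t (mod N)`, and `s ≢ t (mod N)`; consequently the `q²`-cyclotomic cosets of `s` and
of `t` modulo `N` are the singletons `{s}` and `{t}`. -/
theorem cyclotomic_cosets_of_s_and_t_are_singletons
    (q : ℤ) (hq : ∃ p k : ℕ, Nat.Prime p ∧ Odd p ∧ 0 < k ∧ q = (p : ℤ) ^ k)
    (n r N s u t : ℤ) (hn : n = q ^ 2 + 1) (hr : r = q + 1) (hN : N = r * n)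
    (hs : 2 * s = q ^ 2 + 1) (hu : 2 * u = q - 1) (ht : t = 1 + r * (u + s)) :
    q ^ 2 * s ≡ s [ZMOD N] ∧
    q ^ 2 * t ≡ t [ZMOD N] ∧
    ¬ (s ≡ t [ZMOD N]) ∧
    {x : ℤ | ∃ k : ℕ, x = (s * q ^ (2 * k)) % N} = {s % N} ∧
    {x : ℤ | ∃ k : ℕ, x = (t * q ^ (2 * k)) % N} = {t % N} := by
  have hq_pos : 0 < q := by
    obtain ⟨p, k, hp, -, -, rfl⟩ := hq
    exact pow_pos (mod_cast hp.pos) k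
  obtain rfl : q = 2 * u + 1 := by linarith
  obtain rfl : s = 2 * u ^ 2 + 2 * u + 1 := by linarith
  have hN' : N = 4 * (u + 1) * (2 * u ^ 2 + 2 * u + 1) := by
    rw [hN, hr, hn]
    ring
  have ht' : t = (2 * u + 3) * (2 * u ^ 2 + 2 * u + 1) := by
    rw [ht, hr]
    ring
  have hfix_s : (2 * u + 1) ^ 2 * (2 * u ^ 2 + 2 * u + 1) ≡ 2 * u ^ 2 + 2 * u + 1 [ZMOD N] :=
    (Int.modEq_iff_dvd.2 ⟨u, by rw [hN']; ring⟩).symm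
  have hfix_t : (2 * u + 1) ^ 2 * t ≡ t [ZMOD N] :=
    (Int.modEq_iff_dvd.2 ⟨u * (2 * u + 3), by rw [hN', ht']; ring⟩).symm
  refine ⟨hfix_s, hfix_t, fun h => ?_, cyclotomicCoset_eq_singleton hfix_s,
    cyclotomicCoset_eq_singleton hfix_t⟩
  obtain ⟨c, hc⟩ := Int.modEq_iff_dvd.1 h
  have hu_ne : u + 1 ≠ 0 := by omega
  have hs_ne : 2 * u ^ 2 + 2 * u + 1 ≠ 0 := by nlinarith [sq_nonneg u, sq_nonneg (u + 1)]
  have hc' : 2 * c = 1 := by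
    apply mul_left_cancel₀ (mul_ne_zero hu_ne hs_ne)
    rw [hN', ht'] at hc
    linarith
  omega
end

section
/- For all nonnegative integers i and j: (a) −q(s − ri) ≡ s − rj (mod N) holds if and only if qi + j ≡ s (mod n); and (b) −q(s − ri) ≡ s + rj (mod N) holds if and only if qi ≡ s + j (mod n). -/
/-- For all nonnegative integers `i` and `j`:
(a) `−q(s − ri) ≡ s − rj (mod N)` iff `qi + j ≡ s (mod n)`; and
(b) `−q(s − ri) ≡ s + rj (mod N)` iff `qi ≡ s + j (mod n)`. -/
theorem neg_q_mul_modEq_iff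
    (q : ℤ) (hq : ∃ p k : ℕ, Nat.Prime p ∧ Odd p ∧ 0 < k ∧ q = (p : ℤ) ^ k)
    (n r N s : ℤ) (hn : n = q ^ 2 + 1) (hr : r = q + 1) (hN : N = r * n)
    (hs : 2 * s = q ^ 2 + 1)
    (i j : ℤ) (hi : 0 ≤ i) (hj : 0 ≤ j) :
    ((-q * (s - r * i) ≡ s - r * j [ZMOD N]) ↔ (q * i + j ≡ s [ZMOD n])) ∧
    ((-q * (s - r * i) ≡ s + r * j [ZMOD N]) ↔ (q * i ≡ s + j [ZMOD n])) := by
  have hr0 : r ≠ 0 := by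
    obtain ⟨p, k, -, -, -, hqp⟩ := hq
    have hq0 : 0 ≤ q := hqp ▸ by positivity
    omega
  have ha : s - r * j - -q * (s - r * i) = r * (s - (q * i + j)) := by
    rw [hr]; ring
  have hb : s + r * j - -q * (s - r * i) = r * (s + j - q * i) := by
    rw [hr]; ring
  constructor
  · rw [Int.modEq_iff_dvd, Int.modEq_iff_dvd, ha, hN, mul_dvd_mul_iff_left hr0]
  · rw [Int.modEq_iff_dvd, Int.modEq_iff_dvd, hb, hN, mul_dvd_mul_iff_left hr0]
end

section
/- The code C is an MDS code with parameters [q²+1, q² − 2δ, 2δ + 2]: its dimension over K equals q² − 2δ = n − (2δ+1), and the least Hamming weight of a nonzero codeword of C equals exactly 2δ + 2 (meeting the Singleton bound). -/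
set_option synthInstance.maxHeartbeats 400000
open Polynomial in
theorem eq_zero_of_sum_mul_pow_eq_zero {ι F : Type*} [Fintype ι] [Field F] {x : ι → F}
    (hx : Function.Injective x) (d : ι → F) (S : Finset ι) (hS : ∀ k, d k ≠ 0 → k ∈ S) (m : ℕ)
    (hcard : S.card ≤ m) (h : ∀ j < m, ∑ k, d k * x k ^ j = 0) : d = 0 := by
  classical
  have key : ∀ P : F[X], P.natDegree < m → ∑ k, d k * P.eval (x k) = 0 := by
    intro P hP
    simp_rw [eval_eq_sum_range' hP, Finset.mul_sum]
    rw [Finset.sum_comm]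
    refine Finset.sum_eq_zero fun j hj => ?_
    calc ∑ k, d k * (P.coeff j * x k ^ j) = P.coeff j * ∑ k, d k * x k ^ j := by
          rw [Finset.mul_sum]
          exact Finset.sum_congr rfl fun k _ => by ring
      _ = 0 := by rw [h j (Finset.mem_range.mp hj), mul_zero]
  funext k₀
  by_contra hk₀
  have hmem := hS k₀ hk₀
  have hpos : 0 < S.card := Finset.card_pos.mpr ⟨k₀, hmem⟩
  have hsum := key (∏ k ∈ S.erase k₀, (X - C (x k))) (by
    rw [natDegree_prod_of_monic _ _ fun k _ => monic_X_sub_C _]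
    simp only [natDegree_X_sub_C, Finset.sum_const, smul_eq_mul, mul_one,
      Finset.card_erase_of_mem hmem]
    omega)
  simp only [eval_prod, eval_sub, eval_X, eval_C] at hsum
  rw [Finset.sum_eq_single k₀] at hsum
  · rcases mul_eq_zero.mp hsum with h0 | h0
    · exact hk₀ h0
    · obtain ⟨k, hk, hk'⟩ := Finset.prod_eq_zero_iff.mp h0
      exact (Finset.mem_erase.mp hk).1 (hx (sub_eq_zero.mp hk')).symm
  · intro k _ hk
    by_cases hd : d k = 0
    · simp [hd]
    · rw [Finset.prod_eq_zero (Finset.mem_erase.mpr ⟨hk, hS k hd⟩) (sub_self _), mul_zero]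
  · simp

theorem hammingNorm_le_of_castLE_eq_zero {K : Type*} [Zero K] [DecidableEq K] {m n : ℕ}
    (hmn : m ≤ n) (c : Fin n → K) (h : ∀ i : Fin m, c (Fin.castLE hmn i) = 0) :
    hammingNorm c ≤ n - m := by
  have hsub : (Finset.univ.filter fun i => c i ≠ 0) ⊆
      (Finset.univ.map (Fin.castLEEmb hmn))ᶜ := by
    intro i hi
    simp only [Finset.mem_filter, Finset.mem_univ, true_and] at hi
    simp only [Finset.mem_compl, Finset.mem_map, Finset.mem_univ, true_and, not_exists]
    rintro j rfl
    exact hi (h j)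
  calc hammingNorm c ≤ _ := Finset.card_le_card hsub
    _ = n - m := by simp [Finset.card_compl]

/-- A code of length `n` with minimum distance greater than `m` and codimension at most `m`
is MDS. -/
theorem Submodule.mds_of_lt_hammingNorm {K : Type*} [Field K] [DecidableEq K] {n m : ℕ}
    (hmn : m < n) (C : Submodule K (Fin n → K))
    (hd : ∀ c ∈ C, c ≠ 0 → m < hammingNorm c) (hdim : n - m ≤ Module.finrank K C) :
    Module.finrank K C = n - m ∧ ∃ c ∈ C, c ≠ 0 ∧ hammingNorm c = m + 1 := by
  constructor
  · refine le_antisymm ?_ hdim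
    have hle : n - m ≤ n := Nat.sub_le _ _
    have hinj : Function.Injective
        ((LinearMap.funLeft K K (Fin.castLE hle)).comp C.subtype) := by
      rw [← LinearMap.ker_eq_bot, LinearMap.ker_eq_bot']
      intro c hc
      by_contra hne
      have h1 := hd c c.2 (by simpa using hne)
      have h2 := hammingNorm_le_of_castLE_eq_zero hle (c : Fin n → K) fun i => congrFun hc i
      omega
    simpa using LinearMap.finrank_le_finrank_of_injective hinj
  · have hle : n - m - 1 ≤ n := by omega
    have hker := LinearMap.ker_ne_bot_of_finrank_lt
      (f := (LinearMap.funLeft K K (Fin.castLE hle)).comp C.subtype)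
      (by rw [Module.finrank_fin_fun]; omega)
    obtain ⟨c, hc, hne⟩ := Submodule.exists_mem_ne_zero_of_ne_bot hker
    have hne' : (c : Fin n → K) ≠ 0 := by simpa using hne
    refine ⟨c, c.2, hne', ?_⟩
    have h1 := hd c c.2 hne'
    have h2 := hammingNorm_le_of_castLE_eq_zero hle (c : Fin n → K) fun i => congrFun hc i
    omega

/-- The fixed field of an involution has index at most two. -/
theorem Subfield.finrank_le_two_of_involutive {F : Type*} [Field F] (K : Subfield F) (φ : F →+* F)
    (hφ : ∀ x, φ (φ x) = x) (hK : ∀ x, x ∈ K ↔ φ x = x) : Module.finrank K F ≤ 2 := by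
  classical
  by_cases h : ∀ x, φ x = x
  · refine (finrank_le_one (1 : F) fun x => ⟨⟨x, (hK x).mpr (h x)⟩, ?_⟩).trans one_le_two
    simp [Subfield.smul_def]
  · push Not at h
    obtain ⟨a, ha⟩ := h
    have ha' : a - φ a ≠ 0 := sub_ne_zero.mpr ha.symm
    have hspan : (⊤ : Submodule K F) = Submodule.span K (({1, a} : Finset F) : Set F) := by
      refine (eq_top_iff.mpr fun x _ => ?_).symm
      have hv : φ ((x - φ x) / (a - φ a)) = (x - φ x) / (a - φ a) := by
        rw [map_div₀, map_sub, map_sub, hφ, hφ, ← neg_sub x, ← neg_sub a, neg_div_neg_eq]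
      have hu : φ (x - (x - φ x) / (a - φ a) * a) = x - (x - φ x) / (a - φ a) * a := by
        rw [map_sub, map_mul, hv]
        field_simp
        ring
      rw [Finset.coe_pair, Submodule.mem_span_pair]
      refine ⟨⟨_, (hK _).mpr hu⟩, ⟨_, (hK _).mpr hv⟩, ?_⟩
      simp [Subfield.smul_def]
    rw [← finrank_top, hspan]
    exact (finrank_span_finset_le_card _).trans Finset.card_le_two

/-- The constacyclic code `C` (of length `n = q²+1`, with defining set
`{s + ri : −δ ≤ i ≤ δ}`) is an MDS code with parameters `[q²+1, q² − 2δ, 2δ + 2]`: its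
dimension over `K` equals `q² − 2δ`, and the least Hamming weight of a nonzero codeword
of `C` equals exactly `2δ + 2`. -/
theorem constacyclic_code_is_MDS
    (q : ℕ) (hq : ∃ p k : ℕ, Nat.Prime p ∧ Odd p ∧ 0 < k ∧ q = p ^ k)
    (n N s δ : ℕ) (hn : n = q ^ 2 + 1) (hN : N = (q + 1) * n)
    (hs : 2 * s = q ^ 2 + 1) (hδ : 2 * δ ≤ q - 1)
    (F : Type*) [Field F] [Fintype F] [DecidableEq F] (hF : Fintype.card F = q ^ 4)
    (β : F) (hβ : IsPrimitiveRoot β N)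
    (K : Subfield F) (hK : ∀ x : F, x ∈ K ↔ x ^ (q ^ 2) = x)
    (C : Submodule K (Fin n → K))
    (hC : ∀ c : Fin n → K, c ∈ C ↔ ∀ i : ℤ, -(δ : ℤ) ≤ i → i ≤ (δ : ℤ) →
      ∑ k : Fin n, (c k : F) * β ^ ((((s : ℤ) + ((q : ℤ) + 1) * i)) * ((k : ℕ) : ℤ)) = 0) :
    Module.finrank K C = q ^ 2 - 2 * δ ∧
    (∀ c ∈ C, c ≠ 0 → 2 * δ + 2 ≤ hammingNorm c) ∧
    (∃ c ∈ C, c ≠ 0 ∧ hammingNorm c = 2 * δ + 2) := by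
  obtain ⟨p, k, hp, hpo, hk, hqp⟩ := hq
  have := Fact.mk hp
  have hq3 : 3 ≤ q := by
    have h3 : 3 ≤ p := by
      have := hp.two_le
      rcases hpo with ⟨t, rfl⟩
      omega
    rw [hqp]
    exact h3.trans (Nat.le_self_pow hk.ne' p)
  have hqq : q + 6 ≤ q ^ 2 := by nlinarith
  have hβ0 : β ≠ 0 := hβ.ne_zero (by subst hN hn; positivity)
  have hcharF : CharP F p := charP_of_card_eq_prime_pow (f := k * 4) (by rw [hF, hqp, ← pow_mul])
  have hp2 : p ^ (k * 2) = q ^ 2 := by rw [hqp, ← pow_mul]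
  let φ : F →+* F := iterateFrobenius F p (k * 2)
  have hφ : ∀ x, φ x = x ^ q ^ 2 := fun x => by
    rw [← hp2]
    exact iterateFrobenius_def p (k * 2) x
  have hφφ : ∀ x, φ (φ x) = x := fun x => by
    rw [hφ, hφ, ← pow_mul, ← pow_add, ← hF, FiniteField.pow_card]
  have hKφ : ∀ x, x ∈ K ↔ φ x = x := fun x => by rw [hK, hφ]
  have hfin : Module.finrank K F ≤ 2 := K.finrank_le_two_of_involutive φ hφφ hKφ
  have hβN : β ^ (N : ℤ) = 1 := by rw [zpow_natCast, hβ.pow_eq_one]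
  have hφz : ∀ i k : ℤ, φ (β ^ ((s + (q + 1) * i) * k)) = β ^ ((s + (q + 1) * -i) * k) := by
    intro i k
    obtain ⟨t, ht⟩ : Odd q := hqp ▸ hpo.pow
    have hexp : ((s : ℤ) + (q + 1) * i) * k * (q ^ 2 : ℕ) =
        (s + (q + 1) * -i) * k + N * ((t + i) * k) := by
      have h1 : (2 * s : ℤ) = q ^ 2 + 1 := by exact_mod_cast hs
      have h2 : (q : ℤ) = 2 * t + 1 := by exact_mod_cast ht
      have h3 : (N : ℤ) = (q + 1) * (q ^ 2 + 1) := by rw [hN, hn]; push_cast; rfl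
      have h4 : (s : ℤ) * (q ^ 2 - 1) = N * t := by
        have h5 : (2 : ℤ) * (s * (q ^ 2 - 1)) = 2 * (N * t) := by
          rw [h3, ← mul_assoc, h1, h2]; ring
        linarith
      push_cast
      linear_combination k * h4 - i * k * h3
    rw [hφ, ← zpow_natCast, ← zpow_mul, hexp, zpow_add₀ hβ0, zpow_mul β (N : ℤ), hβN, one_zpow,
      mul_one]
  have hφc : ∀ c : K, φ c = c := fun c => (hKφ c).mp c.2
  have hdist : ∀ c ∈ C, c ≠ 0 → 2 * δ + 1 < hammingNorm c := by
    intro c hc hne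
    by_contra! hle
    have hinj : Function.Injective fun k : Fin n => (β ^ (q + 1)) ^ (k : ℕ) := fun a b hab =>
      Fin.ext ((hβ.pow (by subst hN hn; positivity) hN).pow_inj a.2 b.2 hab)
    have hzero := eq_zero_of_sum_mul_pow_eq_zero hinj
      (fun k => (c k : F) * β ^ (((s : ℤ) + (q + 1) * -δ) * (k : ℕ)))
      (Finset.univ.filter fun k => c k ≠ 0)
      (fun k hk => by
        simp only [Finset.mem_filter, Finset.mem_univ, true_and]
        rintro h0
        simp [h0] at hk) (2 * δ + 1) hle (by
      intro j hj
      rw [← (hC c).mp hc (j - δ) (by omega) (by omega)]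
      refine Finset.sum_congr rfl fun k _ => ?_
      rw [mul_assoc, ← pow_mul, ← pow_mul, ← zpow_natCast, ← zpow_add₀ hβ0]
      congr 2
      push_cast
      ring)
    refine hne (funext fun k => ?_)
    have hk := congrFun hzero k
    simpa [hβ0, zpow_ne_zero] using hk
  have hw : ∀ k : Fin n, β ^ (((s : ℤ) + (q + 1) * 0) * (k : ℕ)) ∈ K := fun k => by
    rw [hKφ, hφz, neg_zero]
  let L : (Fin n → K) →ₗ[K] K × (Fin δ → F) :=
    (Fintype.linearCombination K fun k => (⟨_, hw k⟩ : K)).prod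
      (LinearMap.pi fun j : Fin δ => Fintype.linearCombination K fun k : Fin n =>
        β ^ (((s : ℤ) + (q + 1) * ((j : ℕ) + 1 : ℤ)) * (k : ℕ)))
  have hLC : LinearMap.ker L ≤ C := by
    intro c hc
    rw [hC]
    have hnonneg : ∀ j : ℕ, j ≤ δ →
        ∑ k : Fin n, (c k : F) * β ^ (((s : ℤ) + (q + 1) * j) * (k : ℕ)) = 0 := by
      rintro (_ | j) hj
      · have h0 := congrArg (fun x => ((x.1 : K) : F)) (LinearMap.mem_ker.mp hc)
        simpa [L, Fintype.linearCombination_apply] using h0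
      · have h1 := congrFun (congrArg Prod.snd (LinearMap.mem_ker.mp hc)) ⟨j, hj⟩
        simpa [L, Fintype.linearCombination_apply, Subfield.smul_def] using h1
    intro i hi hi'
    rcases Int.eq_nat_or_neg i with ⟨j, rfl | rfl⟩
    · exact hnonneg j (by omega)
    · have h := congrArg φ (hnonneg j (by omega))
      rw [map_sum, map_zero] at h
      simpa only [map_mul, hφc, hφz] using h
  have hdim : n - (2 * δ + 1) ≤ Module.finrank K C := by
    have h1 := L.finrank_range_add_finrank_ker
    have h2 := Submodule.finrank_mono hLC
    have h3 : Module.finrank K (LinearMap.range L) ≤ 1 + δ * 2 := by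
      refine (Submodule.finrank_le _).trans ?_
      rw [Module.finrank_prod, Module.finrank_self, Module.finrank_pi_fintype]
      simpa using Nat.mul_le_mul_left δ hfin
    rw [Module.finrank_fin_fun] at h1
    omega
  obtain ⟨hrank, hex⟩ := C.mds_of_lt_hammingNorm (by omega) hdist hdim
  exact ⟨by omega, hdist, hex⟩
end
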